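/- Let F: A → C be an accessible functor and let K be a full subcategory of C that is closed under isomorphisms and is the full image of an accessible functor. Then the full preimage F⁻¹K (the full subcategory of A on objects X with FX ∈ K) is also closed under isomorphisms and is the full image of an accessible functor. -/

import Mathlib

universe v u₁ u₂ u₃

open CategoryTheory Limits Opposite

namespace Paper

/-- a preorder is `κ`-directed if every subset of cardinality `< κ` has an upper bound -/
def IsCardinalDirected (κ : Cardinal.{v}) (J : Type v) [Preorder J] : Prop :=
  ∀ S : Set J, Cardinal.mk S < κ → ∃ j : J, ∀ s ∈ S, s ≤ j

/-- an object `X` is `κ`-presentable if `Hom(X,-)` preserves `κ`-directed colimits -/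
def IsPresentableObj (κ : Cardinal.{v}) {K : Type u₁} [Category.{v} K] (X : K) : Prop :=
  ∀ (J : Type v) [Preorder J], IsCardinalDirected κ J →
    Nonempty (PreservesColimitsOfShape J (coyoneda.obj (op X)))

/-- `X` is a `κ`-directed colimit of objects from the set `A` -/
def IsDirectedColimitFrom (κ : Cardinal.{v}) {K : Type u₁} [Category.{v} K]
    (A : Set K) (X : K) : Prop :=
  ∃ (J : Type v) (pre : Preorder J),
    letI := pre
    IsCardinalDirected κ J ∧
      ∃ (D : J ⥤ K) (c : Cocone D), Nonempty (IsColimit c) ∧ c.pt = X ∧ ∀ j : J, D.obj j ∈ A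

/-- `κ`-accessible category -/
structure IsCardinalAccessible (κ : Cardinal.{v}) (K : Type u₁) [Category.{v} K] : Prop where
  isRegular : κ.IsRegular
  hasDirectedColimits :
    ∀ (J : Type v) [Preorder J], IsCardinalDirected κ J → HasColimitsOfShape J K
  generators : ∃ A : Set K, Small.{v} A ∧ (∀ X ∈ A, IsPresentableObj κ X) ∧
    ∀ X : K, IsDirectedColimitFrom κ A X

/-- `F` preserves `κ`-directed colimits -/
def PreservesCardinalDirectedColimits (κ : Cardinal.{v}) {A : Type u₁} [Category.{v} A]
    {C : Type u₂} [Category.{v} C] (F : A ⥤ C) : Prop :=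
  ∀ (J : Type v) [Preorder J], IsCardinalDirected κ J →
    Nonempty (PreservesColimitsOfShape J F)

/-- accessible functor: for some regular cardinal `κ`, both categories are
`κ`-accessible and `F` preserves `κ`-directed colimits -/
def IsAccessibleFunctor {A : Type u₁} [Category.{v} A] {C : Type u₂} [Category.{v} C]
    (F : A ⥤ C) : Prop :=
  ∃ κ : Cardinal.{v}, IsCardinalAccessible κ A ∧ IsCardinalAccessible κ C ∧
    PreservesCardinalDirectedColimits κ F

/-!
As `P` is closed under isomorphisms and is the image of `G : B ⥤ C`, its preimage under `F` is the
image of the first projection of the pseudopullback `F ⊡ G`, whose objects are the triples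
`(X, Y, e)` with `e : F X ≅ G Y`. It remains to show that `F ⊡ G` and this projection are
accessible, which is due to Makkai and Paré.

Colimits in `F ⊡ G` are computed componentwise, so the point is to find a generator. Choose `κ` such
that `F` and `G` preserve `κ`-filtered colimits and `κ`-presentable objects. Given `(X, Y, e)`,
write `X` and `Y` as colimits of `κ`-presentable objects over the same `κ`-directed poset. For a
suitable `κ' > κ`, they are also the `κ'`-directed colimits of the objects `X_U` and `Y_U`, the
colimits over those `κ`-directed subsets `U` of fewer than `κ'` elements that are closed under any
prescribed operations, and these `X_U` and `Y_U` are `κ'`-presentable. As the `κ`-presentable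
objects in play have fewer than `κ'` morphisms between them, the operations can be chosen so that
`e` and its inverse restrict to `F X_U ⟶ G Y_U` and back, and so that `F X_U ⟶ F X` and
`G Y_U ⟶ G Y` are monic as far as these objects can see. The restrictions are then mutually inverse
and natural in `U`, and exhibit `(X, Y, e)` as a `κ'`-directed colimit of objects with
`κ'`-presentable components.
-/

section StableSubsets

open Cardinal

/-- A subset of `P` is `(κ, κ')`-stable for the demands `E : P → Set P` if it has fewer than `κ'`
elements, is `κ`-directed, and contains `E p` whenever it contains `p`. -/
structure IsStable (κ κ' : Cardinal.{v}) [Fact κ.IsRegular] {P : Type v} [PartialOrder P]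
    (E : P → Set P) (U : Set P) : Prop where
  hasCardinalLT : HasCardinalLT U κ'
  isCardinalFiltered : IsCardinalFiltered U κ
  subset : ∀ p ∈ U, E p ⊆ U

/-- In every `κ`-directed poset, any set of fewer than `κ'` elements lies in a stable subset,
whatever the demands, as long as each of them has fewer than `κ'` elements. With empty demands,
this is characterization (iv) of Adámek and Rosický, Theorem 2.11, of the relation
"`κ` is sharply smaller than `κ'`". -/
def HasStableHulls (κ κ' : Cardinal.{v}) [Fact κ.IsRegular] : Prop :=
  ∀ ⦃P : Type v⦄ [PartialOrder P] [IsCardinalFiltered P κ] (E : P → Set P),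
    (∀ p, HasCardinalLT (E p) κ') → ∀ U₀ : Set P, HasCardinalLT U₀ κ' →
      ∃ U, U₀ ⊆ U ∧ IsStable κ κ' E U

lemma exists_subset_range_of_mk_le {M P : Type v} [Nonempty P] (s : Set P) (hs : #s ≤ #M) :
    ∃ f : M → P, s ⊆ Set.range f := by
  obtain rfl | hne := s.eq_empty_or_nonempty
  · exact ⟨fun _ ↦ Classical.arbitrary P, Set.empty_subset _⟩
  · have := hne.to_subtype
    obtain ⟨e⟩ := hs
    refine ⟨fun m ↦ (Function.invFun e m : s), fun x hx ↦ ⟨e ⟨x, hx⟩, ?_⟩⟩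
    simp only [Function.leftInverse_invFun e.injective _]

lemma bddAbove_range_of_isCardinalFiltered (κ : Cardinal.{v}) [Fact κ.IsRegular] {P : Type v}
    [Preorder P] [IsCardinalFiltered P κ] {K : Type v} (s : K → P) (hK : HasCardinalLT K κ) :
    BddAbove (Set.range s) := by
  refine ⟨IsCardinalFiltered.max s hK, ?_⟩
  rintro _ ⟨k, rfl⟩
  exact leOfHom (IsCardinalFiltered.toMax s hK k)

lemma exists_superset_closed_under_operations {I M P : Type v} {μ : Cardinal.{v}} (hμ : ℵ₀ ≤ μ)
    (hI : μ ^ #I ≤ μ) (hM : #M ≤ μ) (g : (I → P) → M → P) (U₀ : Set P) (hU₀ : #U₀ ≤ μ) :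
    ∃ U, U₀ ⊆ U ∧ #U ≤ μ ∧ ∀ h : I → P, (∀ i, h i ∈ U) → ∀ m, g h m ∈ U := by
  -- `U` consists of the values of the well-founded trees whose leaves are labelled by `U₀` and
  -- whose nodes, of arity `I`, are labelled by `M`.
  let arity : U₀ ⊕ M → Type v := Sum.elim (fun _ ↦ PEmpty) (fun _ ↦ I)
  let eval : WType arity → P := WType.elim P fun
    | ⟨.inl x, _⟩ => x
    | ⟨.inr m, h⟩ => g h m
  have mk_arity_le : Cardinal.sum (fun a ↦ μ ^ #(arity a)) ≤ μ := by
    have power_arity_le : ∀ a, μ ^ #(arity a) ≤ μ := by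
      rintro (_ | _)
      · simpa [arity] using one_le_aleph0.trans hμ
      · exact hI
    calc Cardinal.sum (fun a ↦ μ ^ #(arity a)) ≤ Cardinal.sum fun _ ↦ μ :=
          sum_le_sum _ _ power_arity_le
      _ = (#U₀ + #M) * μ := by simp
      _ ≤ μ := mul_le_of_le hμ (add_le_of_le hμ hU₀ hM) le_rfl
  refine ⟨Set.range eval, fun x hx ↦ ⟨WType.mk (.inl ⟨x, hx⟩) PEmpty.elim, rfl⟩,
    mk_range_le.trans (WType.cardinalMk_le_of_le mk_arity_le), fun h hh m ↦ ?_⟩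
  choose t ht using hh
  obtain rfl : (fun i ↦ eval (t i)) = h := funext ht
  exact ⟨WType.mk (.inr m) t, rfl⟩

lemma exists_upper_bound_operation (κ : Cardinal.{v}) [Fact κ.IsRegular] (P : Type v)
    [PartialOrder P] [IsCardinalFiltered P κ] :
    ∃ ub : (κ.ord.ToType → P) → P, ∀ U : Set P, U.Nonempty →
      (∀ h, (∀ i, h i ∈ U) → ub h ∈ U) → IsCardinalFiltered U κ := by
  have : Nonempty P := IsCardinalFiltered.nonempty P κ
  have exists_ub (h : κ.ord.ToType → P) : ∃ z, BddAbove (Set.range h) → ∀ i, h i ≤ z := by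
    by_cases hh : BddAbove (Set.range h)
    · exact ⟨hh.some, fun _ i ↦ hh.some_mem ⟨i, rfl⟩⟩
    · exact ⟨Classical.arbitrary P, fun hh' ↦ (hh hh').elim⟩
  choose ub hub using exists_ub
  refine ⟨ub, fun U ⟨p, hp⟩ hU ↦ isCardinalFiltered_preorder _ _ fun K s hK ↦ ?_⟩
  obtain _ | _ := isEmpty_or_nonempty K
  · exact ⟨⟨p, hp⟩, isEmptyElim⟩
  obtain ⟨e⟩ : #K ≤ #κ.ord.ToType := by simpa using hK.le
  let h : κ.ord.ToType → P := fun i ↦ s (Function.invFun e i)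
  have bddAbove_range_h : BddAbove (Set.range h) := by
    refine (bddAbove_range_of_isCardinalFiltered κ (fun k ↦ (s k : P))
      ((hasCardinalLT_iff_cardinal_mk_lt _ _).2 hK)).mono ?_
    rintro _ ⟨i, rfl⟩
    exact ⟨_, rfl⟩
  refine ⟨⟨ub h, hU h fun i ↦ (s _).2⟩, fun k ↦ ?_⟩
  have := hub h bddAbove_range_h (e k)
  rwa [show h (e k) = s k by simp only [h, Function.leftInverse_invFun e.injective k]] at this

lemma hasStableHulls_succ (κ μ : Cardinal.{v}) [Fact κ.IsRegular] (hκμ : κ ≤ μ) (hμ : μ ^ κ ≤ μ) :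
    HasStableHulls κ (Order.succ μ) := by
  intro P _ _ E hE U₀ hU₀
  simp only [hasCardinalLT_iff_cardinal_mk_lt, Order.lt_succ_iff] at hE hU₀
  have hμ₀ : ℵ₀ ≤ μ := (IsRegular.aleph0_le Fact.out).trans hκμ
  have mk_insert_le' {s : Set P} {x : P} (hs : #s ≤ μ) : #(insert x s : Set P) ≤ μ :=
    mk_insert_le.trans (add_le_of_le hμ₀ hs (one_le_aleph0.trans hμ₀))
  obtain ⟨p₀⟩ : Nonempty P := IsCardinalFiltered.nonempty P κ
  have : Nonempty P := ⟨p₀⟩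
  have : Nonempty κ.ord.ToType := nonempty_ord_toType (IsRegular.pos Fact.out).ne'
  obtain ⟨ub, hub⟩ := exists_upper_bound_operation κ P
  have exists_operations (h : κ.ord.ToType → P) :
      ∃ g : μ.out → P, insert (ub h) (⋃ i, E (h i)) ⊆ Set.range g := by
    refine exists_subset_range_of_mk_le _ ?_
    rw [mk_out]
    refine mk_insert_le' (mk_iUnion_le_sum_mk.trans ((sum_le_sum _ _ fun i ↦ hE (h i)).trans ?_))
    simpa using mul_le_of_le hμ₀ hκμ le_rfl
  choose g hg using exists_operations
  obtain ⟨U, hU₀U, hUμ, hU⟩ := exists_superset_closed_under_operations hμ₀ (by simpa using hμ)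
    (mk_out μ).le g (insert p₀ U₀) (mk_insert_le' hU₀)
  have insert_subset (h : κ.ord.ToType → P) (hh : ∀ i, h i ∈ U) :
      insert (ub h) (⋃ i, E (h i)) ⊆ U := by
    refine (hg h).trans ?_
    rintro _ ⟨m, rfl⟩
    exact hU h hh m
  refine ⟨U, (Set.subset_insert _ _).trans hU₀U, ?_, ?_, fun p hp x hx ↦ ?_⟩
  · rwa [hasCardinalLT_iff_cardinal_mk_lt, Order.lt_succ_iff]
  · exact hub U ⟨p₀, hU₀U (Set.mem_insert _ _)⟩
      fun h hh ↦ insert_subset h hh (Set.mem_insert _ _)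
  · exact insert_subset (fun _ ↦ p) (fun _ ↦ hp)
      (.inr (Set.mem_iUnion.2 ⟨Classical.arbitrary _, hx⟩))

lemma exists_regular_forall_hasStableHulls (ν : Cardinal.{v}) :
    ∃ κ' : Cardinal.{v}, κ'.IsRegular ∧ ν ≤ κ' ∧
      ∀ κ ≤ ν, ∀ [Fact κ.IsRegular], HasStableHulls κ κ' := by
  let ν' := max ν ℵ₀
  have hν' : ν' ≤ 2 ^ ν' := (cantor ν').le
  refine ⟨Order.succ (2 ^ ν'), isRegular_succ ((le_max_right _ _).trans hν'),
    (le_max_left _ _).trans (hν'.trans (Order.le_succ _)), fun κ hκ _ ↦ ?_⟩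
  have hκν' : κ ≤ ν' := hκ.trans (le_max_left _ _)
  refine hasStableHulls_succ κ _ (hκν'.trans hν') ?_
  rw [← power_mul]
  exact power_le_power_left two_ne_zero (mul_le_of_le (le_max_right _ _) le_rfl hκν')

variable {κ κ' : Cardinal.{v}} [Fact κ.IsRegular] {P : Type v} [PartialOrder P] {E : P → Set P}

lemma HasStableHulls.exists_isStable_mem [IsCardinalFiltered P κ] [Fact κ'.IsRegular]
    (h : HasStableHulls κ κ') (hE : ∀ p, HasCardinalLT (E p) κ') (p : P) :
    ∃ U : Subtype (IsStable κ κ' E), p ∈ U.1 := by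
  obtain ⟨U, hU, hU'⟩ := h E hE {p} (hasCardinalLT_of_finite _ _ (IsRegular.aleph0_le Fact.out))
  exact ⟨⟨U, hU'⟩, hU rfl⟩

lemma HasStableHulls.isCardinalFiltered_isStable [IsCardinalFiltered P κ] [Fact κ'.IsRegular]
    (h : HasStableHulls κ κ') (hE : ∀ p, HasCardinalLT (E p) κ') :
    IsCardinalFiltered (Subtype (IsStable κ κ' E)) κ' := by
  refine isCardinalFiltered_preorder _ _ fun K U hK ↦ ?_
  obtain ⟨V, hUV, hV⟩ := h E hE (⋃ k, (U k).1) (hasCardinalLT_iUnion _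
    ((hasCardinalLT_iff_cardinal_mk_lt _ _).2 hK) fun k ↦ (U k).2.hasCardinalLT)
  exact ⟨⟨V, hV⟩, fun k ↦ (Set.subset_iUnion (fun k ↦ (U k).1) k).trans hUV⟩

lemma hasCardinalLT_arrow {P : Type v} [PartialOrder P] {κ : Cardinal.{v}} (hκ : ℵ₀ ≤ κ)
    (hP : HasCardinalLT P κ) : HasCardinalLT (Arrow P) κ := by
  refine (hasCardinalLT_prod hκ hP hP).of_injective (fun f : Arrow P ↦ (f.left, f.right)) ?_
  rintro ⟨a, b, f⟩ ⟨a', b', f'⟩ h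
  obtain ⟨rfl, rfl⟩ := Prod.mk.inj h
  obtain rfl : f = f' := Subsingleton.elim _ _
  rfl

end StableSubsets

section Subdiagrams

variable {P : Type v} [PartialOrder P] {A : Type u₁} [Category.{v} A]

/-- The inclusion functor of a subset of a poset. -/
abbrev inclusionFunctor (U : Set P) : U ⥤ P :=
  (Subtype.mono_coe (· ∈ U)).functor

/-- The restriction of a diagram indexed by a poset to a subset of that poset. -/
abbrev restrict (D : P ⥤ A) (U : Set P) : U ⥤ A :=
  inclusionFunctor U ⋙ D

variable (D : P ⥤ A)

/-- The functor between nested subsets of a poset given by inclusion. -/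
abbrev inclusionMap {U V : Set P} (h : U ⊆ V) : U ⥤ V :=
  Monotone.functor (f := Set.inclusion h) fun _ _ hpq ↦ hpq

/-- The map between the colimits over two nested subsets of the index poset. -/
noncomputable def subdiagramMap {U V : Set P} [HasColimitsOfShape U A] [HasColimitsOfShape V A]
    (h : U ⊆ V) : colimit (restrict D U) ⟶ colimit (restrict D V) :=
  colimit.pre (restrict D V) (inclusionMap h)

lemma ι_comp_subdiagramMap {U V : Set P} [HasColimitsOfShape U A] [HasColimitsOfShape V A]
    (h : U ⊆ V) (p : U) :
    colimit.ι (restrict D U) p ≫ subdiagramMap D h = colimit.ι (restrict D V) (Set.inclusion h p) :=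
  colimit.ι_pre (restrict D V) (inclusionMap h) p

lemma subdiagramMap_comp {U V W : Set P} [HasColimitsOfShape U A] [HasColimitsOfShape V A]
    [HasColimitsOfShape W A] (h : U ⊆ V) (h' : V ⊆ W) :
    subdiagramMap D h ≫ subdiagramMap D h' = subdiagramMap D (h.trans h') :=
  colimit.pre_pre (restrict D W) (inclusionMap h') (inclusionMap h)

variable (S : Set P → Prop) [∀ U : Subtype S, HasColimitsOfShape U.1 A]

/-- The functor sending a subset `U` of `P` satisfying `S` to the colimit of the restriction of
`D` to `U`. -/
noncomputable def subdiagramColimit : Subtype S ⥤ A where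
  obj U := colimit (restrict D U.1)
  map f := subdiagramMap D (leOfHom f)
  map_id _ := colimit.hom_ext fun p ↦ by
    rw [ι_comp_subdiagramMap, Category.comp_id]
  map_comp f g := (subdiagramMap_comp D (leOfHom f) (leOfHom g)).symm

variable {S}

/-- The canonical map from a value of `D` to a colimit over a subset. -/
noncomputable def toSubdiagramColimit (U : Subtype S) (p : U.1) :
    D.obj p.1 ⟶ (subdiagramColimit D S).obj U :=
  colimit.ι (restrict D U.1) p

/-- The canonical maps `toSubdiagramColimit D U p`, as a cocone. -/
noncomputable def subdiagramCocone (U : Subtype S) : Cocone (restrict D U.1) where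
  pt := (subdiagramColimit D S).obj U
  ι.app := toSubdiagramColimit D U
  ι.naturality := (colimit.cocone (restrict D U.1)).ι.naturality

/-- The cocone `subdiagramCocone D U` is a colimit cocone. -/
noncomputable def isColimitSubdiagramCocone (U : Subtype S) : IsColimit (subdiagramCocone D U) :=
  colimit.isColimit (restrict D U.1)

variable {D} in
lemma colimitsOfShape_subdiagramColimit {Q : ObjectProperty A} (hD : ∀ p, Q (D.obj p))
    (U : Subtype S) : Q.colimitsOfShape U.1 ((subdiagramColimit D S).obj U) :=
  ⟨{  diag := restrict D U.1
      ι := (subdiagramCocone D U).ι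
      isColimit := isColimitSubdiagramCocone D U
      prop_diag_obj p := hD p.1 }⟩

variable {D} in
lemma subdiagramColimit_hom_ext {U : Subtype S} {X : A}
    {f g : (subdiagramColimit D S).obj U ⟶ X}
    (h : ∀ p, toSubdiagramColimit D U p ≫ f = toSubdiagramColimit D U p ≫ g) : f = g :=
  (isColimitSubdiagramCocone D U).hom_ext h

lemma toSubdiagramColimit_map {U V : Subtype S} (f : U ⟶ V) (p : U.1) :
    toSubdiagramColimit D U p ≫ (subdiagramColimit D S).map f =
      toSubdiagramColimit D V (Set.inclusion (leOfHom f) p) :=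
  ι_comp_subdiagramMap D _ p

lemma map_comp_toSubdiagramColimit (U : Subtype S) {p q : U.1} (f : p.1 ⟶ q.1) :
    D.map f ≫ toSubdiagramColimit D U q = toSubdiagramColimit D U p :=
  colimit.w (restrict D U.1) (homOfLE (leOfHom f) : p ⟶ q)

variable {D}

/-- The map out of a colimit over a subset that is induced by a cocone on `D`. -/
noncomputable def fromSubdiagramColimit (c : Cocone D) (U : Subtype S) :
    (subdiagramColimit D S).obj U ⟶ c.pt :=
  (isColimitSubdiagramCocone D U).desc (c.whisker (inclusionFunctor U.1))

lemma toSubdiagramColimit_comp_from (c : Cocone D) (U : Subtype S) (p : U.1) :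
    toSubdiagramColimit D U p ≫ fromSubdiagramColimit c U = c.ι.app p.1 :=
  (isColimitSubdiagramCocone D U).fac _ p

lemma map_comp_fromSubdiagramColimit (c : Cocone D) {U V : Subtype S} (f : U ⟶ V) :
    (subdiagramColimit D S).map f ≫ fromSubdiagramColimit c V = fromSubdiagramColimit c U :=
  subdiagramColimit_hom_ext fun p ↦ by
    rw [← Category.assoc, toSubdiagramColimit_map, toSubdiagramColimit_comp_from,
      toSubdiagramColimit_comp_from]

variable (S) in
/-- The cocone on `subdiagramColimit D S` induced by a cocone on `D`. -/
noncomputable def subdiagramColimitCocone (c : Cocone D) : Cocone (subdiagramColimit D S) where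
  pt := c.pt
  ι.app := fromSubdiagramColimit c
  ι.naturality _ _ f := (map_comp_fromSubdiagramColimit c f).trans (Category.comp_id _).symm

lemma hom_ext_of_isColimit_of_forall_exists_mem {c : Cocone D} (hc : IsColimit c)
    (hS : ∀ p, ∃ U : Subtype S, p ∈ U.1) {X : A} {f g : c.pt ⟶ X}
    (h : ∀ U : Subtype S, fromSubdiagramColimit c U ≫ f = fromSubdiagramColimit c U ≫ g) :
    f = g :=
  hc.hom_ext fun p ↦ by
    obtain ⟨U, hU⟩ := hS p
    rw [← toSubdiagramColimit_comp_from c U ⟨p, hU⟩, Category.assoc, h, Category.assoc]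

variable [IsDirectedOrder (Subtype S)]

lemma toSubdiagramColimit_comp_eq (s : Cocone (subdiagramColimit D S)) {p : P}
    {U V : Subtype S} (hU : p ∈ U.1) (hV : p ∈ V.1) :
    toSubdiagramColimit D U ⟨p, hU⟩ ≫ s.ι.app U = toSubdiagramColimit D V ⟨p, hV⟩ ≫ s.ι.app V := by
  obtain ⟨W, hUW, hVW⟩ := exists_ge_ge U V
  rw [← s.w (homOfLE hUW), ← s.w (homOfLE hVW), ← Category.assoc, ← Category.assoc,
    toSubdiagramColimit_map, toSubdiagramColimit_map]

lemma nonempty_isColimit_subdiagramColimitCocone {c : Cocone D} (hc : IsColimit c)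
    (hS : ∀ p, ∃ U : Subtype S, p ∈ U.1) :
    Nonempty (IsColimit (subdiagramColimitCocone S c)) := by
  choose U hU using hS
  have naturality (s : Cocone (subdiagramColimit D S)) {p q : P} (f : p ⟶ q) :
      D.map f ≫ toSubdiagramColimit D (U q) ⟨q, hU q⟩ ≫ s.ι.app (U q) =
        toSubdiagramColimit D (U p) ⟨p, hU p⟩ ≫ s.ι.app (U p) := by
    obtain ⟨W, hpW, hqW⟩ := exists_ge_ge (U p) (U q)
    rw [toSubdiagramColimit_comp_eq s (hU p) (hpW (hU p)),
      toSubdiagramColimit_comp_eq s (hU q) (hqW (hU q)), ← Category.assoc]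
    exact map_comp_toSubdiagramColimit D W (p := ⟨p, hpW (hU p)⟩) (q := ⟨q, hqW (hU q)⟩) f =≫ _
  let extend (s : Cocone (subdiagramColimit D S)) : Cocone D :=
    { pt := s.pt
      ι.app p := toSubdiagramColimit D (U p) ⟨p, hU p⟩ ≫ s.ι.app (U p)
      ι.naturality _ _ f := (naturality s f).trans (Category.comp_id _).symm }
  have fac (s) (V : Subtype S) :
      fromSubdiagramColimit c V ≫ hc.desc (extend s) = s.ι.app V :=
    subdiagramColimit_hom_ext fun p ↦ by
      rw [← Category.assoc, toSubdiagramColimit_comp_from]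
      exact (hc.fac (extend s) p.1).trans (toSubdiagramColimit_comp_eq s _ p.2)
  exact ⟨{
    desc s := hc.desc (extend s)
    fac := fac
    uniq s m hm := hom_ext_of_isColimit_of_forall_exists_mem hc (fun p ↦ ⟨U p, hU p⟩)
      fun V ↦ (hm V).trans (fac s V).symm }⟩

end Subdiagrams

section RaisingIndex

open Cardinal

variable {κ κ' : Cardinal.{v}} [Fact κ.IsRegular] [Fact κ'.IsRegular]

lemma exists_partialOrder_colimitsOfShape {A : Type u₁} [Category.{v} A] {Q : ObjectProperty A}
    (hQ : Q.IsCardinalFilteredGenerator κ) (X : A) :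
    ∃ (P : Type v) (_ : PartialOrder P) (_ : IsCardinalFiltered P κ), Q.colimitsOfShape P X := by
  obtain ⟨J, _, _, hX⟩ := hQ.exists_colimitsOfShape X
  obtain ⟨P, _, _, T, _⟩ := IsCardinalFiltered.exists_cardinal_directed J κ
  exact ⟨P, inferInstance, inferInstance, Q.colimitsOfShape_le_of_final T X hX⟩

variable {P : Type v} [PartialOrder P] {E : P → Set P} {A : Type u₁} [Category.{v} A]

instance isCardinalFiltered_of_isStable (U : Subtype (IsStable κ κ' E)) :
    IsCardinalFiltered U.1 κ :=
  U.2.isCardinalFiltered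

instance hasColimitsOfShape_of_isStable [HasCardinalFilteredColimits A κ]
    (U : Subtype (IsStable κ κ' E)) : HasColimitsOfShape U.1 A :=
  HasCardinalFilteredColimits.hasColimitsOfShape (κ := κ) A U.1

lemma HasStableHulls.nonempty_isColimit [IsCardinalFiltered P κ] [HasCardinalFilteredColimits A κ]
    (h : HasStableHulls κ κ') (hE : ∀ p, HasCardinalLT (E p) κ') {D : P ⥤ A} {c : Cocone D}
    (hc : IsColimit c) :
    Nonempty (IsColimit (subdiagramColimitCocone (IsStable κ κ' E) c)) := by
  have := h.isCardinalFiltered_isStable hE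
  have := isFiltered_of_isCardinalFiltered (Subtype (IsStable κ κ' E)) κ'
  have : IsDirectedOrder (Subtype (IsStable κ κ' E)) :=
    ⟨fun U V ↦ ⟨IsFiltered.max U V, leOfHom (IsFiltered.leftToMax U V),
      leOfHom (IsFiltered.rightToMax U V)⟩⟩
  exact nonempty_isColimit_subdiagramColimitCocone hc (h.exists_isStable_mem hE)

lemma isCardinalPresentable_of_isColimit_of_hasCardinalLT (hP : HasCardinalLT P κ') {D : P ⥤ A}
    {c : Cocone D} (hc : IsColimit c) (hD : ∀ p, isCardinalPresentable A κ' (D.obj p)) :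
    IsCardinalPresentable c.pt κ' := by
  have (p : P) : IsCardinalPresentable (D.obj p) κ' := hD p
  exact isCardinalPresentable_of_isColimit c hc κ'
    (hasCardinalLT_arrow (IsRegular.aleph0_le Fact.out) hP)

lemma hasCardinalFilteredColimits_of_le (A : Type u₁) [Category.{v} A] (hκ : κ ≤ κ')
    [HasCardinalFilteredColimits A κ] : HasCardinalFilteredColimits A κ' where
  hasColimitsOfShape J _ _ := by
    have := IsCardinalFiltered.of_le J hκ
    exact HasCardinalFilteredColimits.hasColimitsOfShape (κ := κ) A J

instance isStableUnderRetracts_inverseImage {C : Type u₂} [Category.{v} C] (F : A ⥤ C)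
    (Q : ObjectProperty C) [Q.IsStableUnderRetracts] :
    (Q.inverseImage F).IsStableUnderRetracts where
  of_retract h hY := Q.prop_of_retract (h.map F) hY

lemma HasStableHulls.isCardinalFilteredGenerator [HasCardinalFilteredColimits A κ]
    (h : HasStableHulls κ κ') {Q Q' : ObjectProperty A} (hQ : Q.IsCardinalFilteredGenerator κ)
    (hQ' : Q' ≤ isCardinalPresentable A κ')
    (hQQ' : ∀ (P : Type v) [PartialOrder P] [IsCardinalFiltered P κ], HasCardinalLT P κ' →
      Q.colimitsOfShape P ≤ Q') :
    Q'.IsCardinalFilteredGenerator κ' where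
  le_isCardinalPresentable := hQ'
  exists_colimitsOfShape X := by
    obtain ⟨P, _, _, ⟨p⟩⟩ := exists_partialOrder_colimitsOfShape hQ X
    have hE (_ : P) : HasCardinalLT (∅ : Set P) κ' :=
      hasCardinalLT_of_finite _ _ (IsRegular.aleph0_le Fact.out)
    obtain ⟨hc⟩ := h.nonempty_isColimit hE p.isColimit
    exact ⟨_, inferInstance, h.isCardinalFiltered_isStable hE, ⟨{
      diag := _
      ι := _
      isColimit := hc
      prop_diag_obj U := hQQ' U.1 U.2.hasCardinalLT _
        (colimitsOfShape_subdiagramColimit p.prop_diag_obj U) }⟩⟩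

lemma HasStableHulls.isCardinalAccessibleCategory (h : HasStableHulls κ κ') (hκ : κ ≤ κ')
    [IsCardinalAccessibleCategory A κ] : IsCardinalAccessibleCategory A κ' := by
  obtain ⟨Q, _, hQ⟩ := HasCardinalFilteredGenerator.exists_small_generator A κ
  have hQ' : (Q.colimitsCardinalClosure κ').IsCardinalFilteredGenerator κ' := by
    refine h.isCardinalFilteredGenerator hQ
      (ObjectProperty.colimitsCardinalClosure_le_isCardinalPresentable _
        (hQ.le_isCardinalPresentable.trans (isCardinalPresentable_monotone A hκ))) ?_
    intro P _ _ hP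
    have := ObjectProperty.isClosedUnderColimitsOfShape_colimitsCardinalClosure Q κ' P
      (hasCardinalLT_arrow (IsRegular.aleph0_le Fact.out) hP)
    exact (ObjectProperty.colimitsOfShape_monotone P
      (ObjectProperty.le_colimitsCardinalClosure Q κ')).trans
        (ObjectProperty.colimitsOfShape_le _ P)
  have := hasCardinalFilteredColimits_of_le A hκ
  have := hQ'.hasCardinalFilteredGenerator
  constructor

lemma HasStableHulls.isCardinalPresentable_le_inverseImage {C : Type u₂} [Category.{v} C]
    (h : HasStableHulls κ κ') (hκ : κ ≤ κ') [IsCardinalAccessibleCategory A κ] (F : A ⥤ C)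
    [F.IsCardinalAccessible κ]
    (hF : isCardinalPresentable A κ ≤ (isCardinalPresentable C κ').inverseImage F) :
    isCardinalPresentable A κ' ≤ (isCardinalPresentable C κ').inverseImage F := by
  have hQ : (isCardinalPresentable A κ' ⊓
      (isCardinalPresentable C κ').inverseImage F).IsCardinalFilteredGenerator κ' := by
    refine h.isCardinalFilteredGenerator (isCardinalFilteredGenerator_isCardinalPresentable A κ)
      inf_le_left ?_
    rintro P _ _ hP X ⟨p⟩
    have := F.preservesColimitsOfShape_of_isCardinalAccessible κ P
    exact ⟨isCardinalPresentable_of_isColimit_of_hasCardinalLT hP p.isColimit fun x ↦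
        isCardinalPresentable_monotone A hκ _ (p.prop_diag_obj x),
      isCardinalPresentable_of_isColimit_of_hasCardinalLT hP
        (isColimitOfPreserves F p.isColimit) fun x ↦ hF _ (p.prop_diag_obj x)⟩
  rw [hQ.isPresentable_eq_retractClosure]
  exact (ObjectProperty.retractClosure_le_iff _ _).2 inf_le_right

lemma exists_isCardinalPresentable_map {C : Type u₂} [Category.{v} C]
    (hC : ∀ X : C, IsPresentable.{v} X) [IsCardinalAccessibleCategory A κ] (F : A ⥤ C) :
    ∃ ν : Cardinal.{v}, ∀ κ' ≥ ν, ∀ [Fact κ'.IsRegular],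
      isCardinalPresentable A κ ≤ (isCardinalPresentable C κ').inverseImage F := by
  obtain ⟨Q, _, hQ⟩ := HasCardinalFilteredGenerator.exists_small_generator A κ
  choose rank _ rank_spec using fun X : C ↦ (hC X).exists_cardinal
  let ν : Cardinal.{v} := ⨆ X : Shrink.{v} (Subtype Q), rank (F.obj ((equivShrink _).symm X).1)
  refine ⟨ν, fun κ' hκ' _ ↦ ?_⟩
  rw [hQ.isPresentable_eq_retractClosure, ObjectProperty.retractClosure_le_iff]
  intro X hX
  have := rank_spec (F.obj X)
  refine isCardinalPresentable_of_le (κ := rank (F.obj X)) _ (le_trans ?_ hκ')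
  simpa using le_ciSup (f := fun X : Shrink.{v} (Subtype Q) ↦
    rank (F.obj ((equivShrink _).symm X).1)) Cardinal.bddAbove_of_small (equivShrink _ ⟨X, hX⟩)

end RaisingIndex

section MonoTests

variable {C : Type u₂} [Category.{v} C]

/-- The objects `T` for which `j` looks like a monomorphism: a morphism from `T` to the source of
`j` is determined by its composition with `j`. -/
def monoTests {Y Z : C} (j : Y ⟶ Z) : ObjectProperty C :=
  fun T ↦ Function.Injective fun f : T ⟶ Y ↦ f ≫ j

variable {Y Z : C} {j : Y ⟶ Z}

instance isClosedUnderColimitsOfShape_monoTests (J : Type v) [SmallCategory J] :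
    (monoTests j).IsClosedUnderColimitsOfShape J where
  colimitsOfShape_le := by
    rintro T ⟨p⟩ f g hfg
    refine p.isColimit.hom_ext fun x ↦ p.prop_diag_obj x ?_
    simpa only [Category.assoc] using p.ι.app x ≫= hfg

lemma exists_lift_of_monoTests {J : Type v} [SmallCategory J] {N : J ⥤ C} {c : Cocone N}
    (hc : IsColimit c) (hN : ∀ x, monoTests j (N.obj x)) (g : c.pt ⟶ Z)
    (hg : ∀ x, ∃ f : N.obj x ⟶ Y, f ≫ j = c.ι.app x ≫ g) : ∃ f : c.pt ⟶ Y, f ≫ j = g := by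
  choose f hf using hg
  have naturality {x y : J} (a : x ⟶ y) : N.map a ≫ f y = f x :=
    hN x (by simp only [Category.assoc, hf, c.w_assoc])
  let s : Cocone N :=
    { pt := Y
      ι.app := f
      ι.naturality _ _ a := (naturality a).trans (Category.comp_id _).symm }
  refine ⟨hc.desc s, hc.hom_ext fun x ↦ ?_⟩
  rw [hc.fac_assoc, hf]

lemma exists_iso_of_monoTests {X X' Y' : C} {i : X ⟶ X'} {j : Y ⟶ Y'} (hX : monoTests i X)
    (hY : monoTests j Y) (e : X' ≅ Y') (hf : ∃ f : X ⟶ Y, f ≫ j = i ≫ e.hom)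
    (hg : ∃ g : Y ⟶ X, g ≫ i = j ≫ e.inv) : ∃ ε : X ≅ Y, ε.hom ≫ j = i ≫ e.hom := by
  obtain ⟨f, hf⟩ := hf
  obtain ⟨g, hg⟩ := hg
  refine ⟨⟨f, g, hX ?_, hY ?_⟩, hf⟩
  · simp only [Category.assoc, hg, reassoc_of% hf, e.hom_inv_id, Category.comp_id,
      Category.id_comp]
  · simp only [Category.assoc, hf, reassoc_of% hg, e.inv_hom_id, Category.comp_id,
      Category.id_comp]

end MonoTests

section Demands

lemma exists_hom_pair_of_isColimit {C : Type u₂} [Category.{v} C] {J : Type v} [SmallCategory J]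
    (κ : Cardinal.{v}) [Fact κ.IsRegular] [IsCardinalFiltered J κ] {D : J ⥤ C} {c : Cocone D}
    (hc : IsColimit c) {T : C} [IsCardinalPresentable T κ] (f g : T ⟶ c.pt) :
    ∃ (r : J) (a b : T ⟶ D.obj r), a ≫ c.ι.app r = f ∧ b ≫ c.ι.app r = g := by
  have := isFiltered_of_isCardinalFiltered J κ
  obtain ⟨p, a, rfl⟩ := IsCardinalPresentable.exists_hom_of_isColimit κ hc f
  obtain ⟨q, b, rfl⟩ := IsCardinalPresentable.exists_hom_of_isColimit κ hc g
  exact ⟨IsFiltered.max p q, a ≫ D.map (IsFiltered.leftToMax p q),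
    b ≫ D.map (IsFiltered.rightToMax p q), by simp, by simp⟩

variable {κ κ' : Cardinal.{v}} [Fact κ.IsRegular] [Fact κ'.IsRegular] {P : Type v}
  [PartialOrder P] {C : Type u₂} [Category.{v} C] {M N : P ⥤ C} {cM : Cocone M} {cN : Cocone N}

variable [IsCardinalFiltered P κ]

lemma exists_monoTests_demands {𝒯 : ObjectProperty C} (h𝒯 : 𝒯 ≤ isCardinalPresentable C κ)
    (hN : ∀ p, HasCardinalLT (Σ T : Subtype 𝒯, T.1 ⟶ N.obj p) κ') (hcN : IsColimit cN) :
    ∃ E : P → Set P, (∀ p, HasCardinalLT (E p) κ') ∧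
      ∀ (U : Set P) [IsCardinalFiltered U κ], (∀ p ∈ U, E p ⊆ U) →
        ∀ {d : Cocone (restrict N U)}, IsColimit d → ∀ {j : d.pt ⟶ cN.pt},
          (∀ p : U, d.ι.app p ≫ j = cN.ι.app p.1) → 𝒯 ≤ monoTests j := by
  have exists_equalizing (p : P) (T : Subtype 𝒯) (f g : T.1 ⟶ N.obj p) : ∃ z,
      f ≫ cN.ι.app p = g ≫ cN.ι.app p → ∃ a : p ⟶ z, f ≫ N.map a = g ≫ N.map a := by
    by_cases h : f ≫ cN.ι.app p = g ≫ cN.ι.app p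
    · have : IsCardinalPresentable T.1 κ := h𝒯 _ T.2
      obtain ⟨z, a, ha⟩ := IsCardinalPresentable.exists_eq_of_isColimit' κ hcN f g h
      exact ⟨z, fun _ ↦ ⟨a, ha⟩⟩
    · exact ⟨p, fun h' ↦ (h h').elim⟩
  choose z hz using exists_equalizing
  let E (p : P) : Set P := Set.range
    fun x : Σ T : Subtype 𝒯, (T.1 ⟶ N.obj p) × (T.1 ⟶ N.obj p) ↦ z p x.1 x.2.1 x.2.2
  refine ⟨E, fun p ↦ ?_, fun U _ hU d hd j hj T hT f g hfg ↦ ?_⟩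
  · refine HasCardinalLT.of_surjective ?_ _ Set.rangeFactorization_surjective
    refine (hasCardinalLT_prod (Cardinal.IsRegular.aleph0_le Fact.out) (hN p) (hN p)).of_injective
      (fun x ↦ (⟨x.1, x.2.1⟩, ⟨x.1, x.2.2⟩)) ?_
    rintro ⟨T, f, g⟩ ⟨T', f', g'⟩ h
    aesop
  · have : IsCardinalPresentable T κ := h𝒯 _ hT
    obtain ⟨r, a, b, rfl, rfl⟩ := exists_hom_pair_of_isColimit κ hd f g
    replace hfg : a ≫ cN.ι.app r.1 = b ≫ cN.ι.app r.1 := by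
      simpa only [Category.assoc, hj] using hfg
    obtain ⟨w, hw⟩ := hz r.1 ⟨T, hT⟩ a b hfg
    let r' : U := ⟨z r.1 ⟨T, hT⟩ a b, hU _ r.2 ⟨⟨⟨T, hT⟩, a, b⟩, rfl⟩⟩
    let w' : r ⟶ r' := homOfLE w.le
    have hw' : a ≫ (restrict N U).map w' = b ≫ (restrict N U).map w' := hw
    rw [← d.w w', ← Category.assoc, ← Category.assoc]
    exact hw' =≫ d.ι.app r'

lemma exists_lift_demands (hM : ∀ p, IsCardinalPresentable (M.obj p) κ) (hcN : IsColimit cN)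
    (φ : cM.pt ⟶ cN.pt) :
    ∃ E : P → Set P, (∀ p, HasCardinalLT (E p) κ') ∧
      ∀ U : Set P, (∀ p ∈ U, E p ⊆ U) → ∀ p ∈ U,
        ∃ q ∈ U, ∃ f : M.obj p ⟶ N.obj q, f ≫ cN.ι.app q = cM.ι.app p ≫ φ := by
  choose q f hf using fun p ↦
    IsCardinalPresentable.exists_hom_of_isColimit κ hcN (cM.ι.app p ≫ φ)
  exact ⟨fun p ↦ {q p},
    fun p ↦ hasCardinalLT_of_finite _ _ (Cardinal.IsRegular.aleph0_le Fact.out),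
    fun U hU p hp ↦ ⟨q p, hU p hp rfl, f p, hf p⟩⟩

lemma exists_iso_demands {𝒯 : ObjectProperty C} (h𝒯 : 𝒯 ≤ isCardinalPresentable C κ)
    (hM : ∀ p, 𝒯 (M.obj p)) (hN : ∀ p, 𝒯 (N.obj p))
    (hM' : ∀ p, HasCardinalLT (Σ T : Subtype 𝒯, T.1 ⟶ M.obj p) κ')
    (hN' : ∀ p, HasCardinalLT (Σ T : Subtype 𝒯, T.1 ⟶ N.obj p) κ')
    (hcM : IsColimit cM) (hcN : IsColimit cN) (e : cM.pt ≅ cN.pt) :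
    ∃ E : P → Set P, (∀ p, HasCardinalLT (E p) κ') ∧
      ∀ (U : Set P) [IsCardinalFiltered U κ], (∀ p ∈ U, E p ⊆ U) →
        ∀ {d : Cocone (restrict M U)} {d' : Cocone (restrict N U)}, IsColimit d → IsColimit d' →
          ∀ {i : d.pt ⟶ cM.pt} {j : d'.pt ⟶ cN.pt}, (∀ p : U, d.ι.app p ≫ i = cM.ι.app p.1) →
            (∀ p : U, d'.ι.app p ≫ j = cN.ι.app p.1) →
              𝒯 ≤ monoTests j ∧ ∃ ε : d.pt ≅ d'.pt, ε.hom ≫ j = i ≫ e.hom := by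
  have hκ' : Cardinal.aleph0 ≤ κ' := Cardinal.IsRegular.aleph0_le Fact.out
  obtain ⟨E₁, hE₁, monoM⟩ := exists_monoTests_demands h𝒯 hM' hcM
  obtain ⟨E₂, hE₂, monoN⟩ := exists_monoTests_demands h𝒯 hN' hcN
  obtain ⟨E₃, hE₃, lift⟩ :=
    exists_lift_demands (κ' := κ') (M := M) (fun p ↦ h𝒯 _ (hM p)) hcN e.hom
  obtain ⟨E₄, hE₄, lift'⟩ :=
    exists_lift_demands (κ' := κ') (M := N) (fun p ↦ h𝒯 _ (hN p)) hcM e.inv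
  refine ⟨fun p ↦ (E₁ p ∪ E₂ p) ∪ (E₃ p ∪ E₄ p), fun p ↦ hasCardinalLT_union hκ'
    (hasCardinalLT_union hκ' (hE₁ p) (hE₂ p)) (hasCardinalLT_union hκ' (hE₃ p) (hE₄ p)),
    fun U _ hU d d' hd hd' i j hi hj ↦ ?_⟩
  simp only [Set.union_subset_iff] at hU
  have hTi : 𝒯 ≤ monoTests i := monoM U (fun p hp ↦ (hU p hp).1.1) hd hi
  have hTj : 𝒯 ≤ monoTests j := monoN U (fun p hp ↦ (hU p hp).1.2) hd' hj
  refine ⟨hTj, exists_iso_of_monoTests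
    ((monoTests i).prop_of_isColimit hd fun p ↦ hTi _ (hM p.1))
    ((monoTests j).prop_of_isColimit hd' fun p ↦ hTj _ (hN p.1)) e
    (exists_lift_of_monoTests hd (fun p ↦ hTj _ (hM p.1)) _ fun p ↦ ?_)
    (exists_lift_of_monoTests hd' (fun p ↦ hTi _ (hN p.1)) _ fun p ↦ ?_)⟩
  · obtain ⟨q, hq, f, hf⟩ := lift U (fun p hp ↦ (hU p hp).2.1) p.1 p.2
    let f' : (restrict M U).obj p ⟶ (restrict N U).obj ⟨q, hq⟩ := f
    refine ⟨f' ≫ d'.ι.app ⟨q, hq⟩, ?_⟩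
    rw [Category.assoc, hj, reassoc_of% hi]
    exact hf
  · obtain ⟨q, hq, f, hf⟩ := lift' U (fun p hp ↦ (hU p hp).2.2) p.1 p.2
    let f' : (restrict N U).obj p ⟶ (restrict M U).obj ⟨q, hq⟩ := f
    refine ⟨f' ≫ d.ι.app ⟨q, hq⟩, ?_⟩
    rw [Category.assoc, hi, reassoc_of% hj]
    exact hf

end Demands

section CategoricalPullback

open CategoricalPullback

variable {A : Type u₁} [Category.{v} A] {B : Type u₃} [Category.{v} B] {C : Type u₂}
  [Category.{v} C] {F : A ⥤ C} {G : B ⥤ C} {J : Type v} [SmallCategory J]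

lemma map_fst_comp_iso_hom_of_isColimit {D : J ⥤ F ⊡ G} {c : Cocone D}
    (hc : IsColimit (F.mapCocone ((π₁ F G).mapCocone c))) {y : F ⊡ G} (s : ∀ x, D.obj x ⟶ y)
    {f : c.pt.fst ⟶ y.fst} {g : c.pt.snd ⟶ y.snd} (hf : ∀ x, (c.ι.app x).fst ≫ f = (s x).fst)
    (hg : ∀ x, (c.ι.app x).snd ≫ g = (s x).snd) :
    F.map f ≫ y.iso.hom = c.pt.iso.hom ≫ G.map g := by
  refine hc.hom_ext fun x ↦ ?_
  change F.map (c.ι.app x).fst ≫ F.map f ≫ y.iso.hom =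
    F.map (c.ι.app x).fst ≫ c.pt.iso.hom ≫ G.map g
  have w : F.map (c.ι.app x).fst ≫ c.pt.iso.hom = (D.obj x).iso.hom ≫ G.map (c.ι.app x).snd :=
    (c.ι.app x).w
  rw [← F.map_comp_assoc, hf, Hom.w, reassoc_of% w, ← G.map_comp, hg]

/-- A cocone in a pseudopullback is a colimit as soon as both of its projections are, provided
that `F` preserves colimits of its shape. -/
noncomputable def isColimitOfProjections [PreservesColimitsOfShape J F] {D : J ⥤ F ⊡ G}
    {c : Cocone D} (h₁ : IsColimit ((π₁ F G).mapCocone c))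
    (h₂ : IsColimit ((π₂ F G).mapCocone c)) : IsColimit c where
  desc s :=
    { fst := h₁.desc ((π₁ F G).mapCocone s)
      snd := h₂.desc ((π₂ F G).mapCocone s)
      w := map_fst_comp_iso_hom_of_isColimit (isColimitOfPreserves F h₁) s.ι.app
        (h₁.fac ((π₁ F G).mapCocone s)) (h₂.fac ((π₂ F G).mapCocone s)) }
  fac _ x := CategoricalPullback.hom_ext (h₁.fac _ x) (h₂.fac _ x)
  uniq s _ hm := CategoricalPullback.hom_ext
    (h₁.uniq ((π₁ F G).mapCocone s) _ fun x ↦ congrArg Hom.fst (hm x))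
    (h₂.uniq ((π₂ F G).mapCocone s) _ fun x ↦ congrArg Hom.snd (hm x))

/-- The cocone over a diagram in a pseudopullback built from colimits of its projections. -/
noncomputable def coconeOfProjections [PreservesColimitsOfShape J F]
    [PreservesColimitsOfShape J G] (D : J ⥤ F ⊡ G) {c₁ : Cocone (D ⋙ π₁ F G)}
    {c₂ : Cocone (D ⋙ π₂ F G)} (h₁ : IsColimit c₁) (h₂ : IsColimit c₂) : Cocone D where
  pt :=
    { fst := c₁.pt
      snd := c₂.pt
      iso := (isColimitOfPreserves F h₁).coconePointsIsoOfNatIso (isColimitOfPreserves G h₂)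
        (Functor.isoWhiskerLeft D (CatCommSq.iso (π₁ F G) (π₂ F G) F G)) }
  ι :=
    { app x :=
        { fst := c₁.ι.app x
          snd := c₂.ι.app x
          w := (isColimitOfPreserves F h₁).comp_coconePointsIsoOfNatIso_hom
            (isColimitOfPreserves G h₂) _ x }
      naturality _ _ a := CategoricalPullback.hom_ext (c₁.ι.naturality a) (c₂.ι.naturality a) }

variable [HasColimitsOfShape J A] [HasColimitsOfShape J B] [PreservesColimitsOfShape J F]
  [PreservesColimitsOfShape J G]

instance hasColimitsOfShape_categoricalPullback : HasColimitsOfShape J (F ⊡ G) where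
  has_colimit D := ⟨⟨coconeOfProjections D (colimit.isColimit _) (colimit.isColimit _),
    isColimitOfProjections (colimit.isColimit (D ⋙ π₁ F G)) (colimit.isColimit (D ⋙ π₂ F G))⟩⟩

instance preservesColimitsOfShape_π₁ : PreservesColimitsOfShape J (π₁ F G) where
  preservesColimit {D} := preservesColimit_of_preserves_colimit_cocone
    (isColimitOfProjections (c := coconeOfProjections D (colimit.isColimit _)
      (colimit.isColimit _)) (colimit.isColimit _) (colimit.isColimit _)) (colimit.isColimit _)

instance preservesColimitsOfShape_π₂ : PreservesColimitsOfShape J (π₂ F G) where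
  preservesColimit {D} := preservesColimit_of_preserves_colimit_cocone
    (isColimitOfProjections (c := coconeOfProjections D (colimit.isColimit _)
      (colimit.isColimit _)) (colimit.isColimit _) (colimit.isColimit _)) (colimit.isColimit _)

end CategoricalPullback

section PullbackPresentable

open CategoricalPullback

variable {A : Type u₁} [Category.{v} A] {B : Type u₃} [Category.{v} B] {C : Type u₂}
  [Category.{v} C] {F : A ⥤ C} {G : B ⥤ C}

lemma isCardinalAccessible_of_isPullback {D : Type*} [Category.{v} D] {W X Y Z : D ⥤ Type v}
    {t : W ⟶ X} {l : W ⟶ Y} {r : X ⟶ Z} {b : Y ⟶ Z} (sq : IsPullback t l r b)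
    (κ : Cardinal.{v}) [Fact κ.IsRegular] [X.IsCardinalAccessible κ] [Y.IsCardinalAccessible κ]
    [Z.IsCardinalAccessible κ] : W.IsCardinalAccessible κ := by
  have (k : WalkingCospan) : ((cospan r b).obj k).IsCardinalAccessible κ := by
    rcases k with _ | _ | _ <;> assumption
  exact Functor.isCardinalAccessible_of_isLimit sq.cone sq.isLimit κ
    (hasCardinalLT_of_finite _ _ (Cardinal.IsRegular.aleph0_le Fact.out))

lemma isPullback_coyoneda (e : F ⊡ G) :
    letI fst : coyoneda.obj (op e) ⟶ π₁ F G ⋙ coyoneda.obj (op e.fst) :=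
      { app _ := ↾fun f ↦ f.fst }
    letI snd : coyoneda.obj (op e) ⟶ π₂ F G ⋙ coyoneda.obj (op e.snd) :=
      { app _ := ↾fun f ↦ f.snd }
    letI compIso : π₁ F G ⋙ coyoneda.obj (op e.fst) ⟶
        π₂ F G ⋙ G ⋙ coyoneda.obj (op (F.obj e.fst)) :=
      { app y := ↾fun f ↦ F.map f ≫ y.iso.hom
        naturality x y a := by
          ext (f : e.fst ⟶ x.fst)
          change F.map (f ≫ a.fst) ≫ y.iso.hom = (F.map f ≫ x.iso.hom) ≫ G.map a.snd
          simp }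
    letI isoComp : π₂ F G ⋙ coyoneda.obj (op e.snd) ⟶
        π₂ F G ⋙ G ⋙ coyoneda.obj (op (F.obj e.fst)) :=
      { app _ := ↾fun g ↦ e.iso.hom ≫ G.map g
        naturality x _ a := by
          ext (g : e.snd ⟶ x.snd)
          change e.iso.hom ≫ G.map (g ≫ a.snd) = (e.iso.hom ≫ G.map g) ≫ G.map a.snd
          simp }
    IsPullback fst snd compIso isoComp := by
  refine .of_forall_isPullback_app fun y ↦ ?_
  rw [Types.isPullback_iff]
  refine ⟨?_, ?_, ?_⟩
  · ext f
    exact f.w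
  · rintro f g ⟨h₁, h₂⟩
    exact CategoricalPullback.hom_ext h₁ h₂
  · intro f g h
    exact ⟨⟨f, g, h⟩, rfl, rfl⟩

instance essentiallySmall_inverseImage_π₁_inf_π₂ (P : ObjectProperty A) (Q : ObjectProperty B)
    [ObjectProperty.EssentiallySmall.{v} P] [ObjectProperty.EssentiallySmall.{v} Q] :
    ObjectProperty.EssentiallySmall.{v} (P.inverseImage (π₁ F G) ⊓ Q.inverseImage (π₂ F G)) := by
  obtain ⟨P', _, _, hP⟩ := ObjectProperty.EssentiallySmall.exists_small_le.{v} P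
  obtain ⟨Q', _, _, hQ⟩ := ObjectProperty.EssentiallySmall.exists_small_le.{v} Q
  let ob (t : Σ (X : Subtype P') (Y : Subtype Q'), F.obj X.1 ≅ G.obj Y.1) : F ⊡ G :=
    ⟨t.1.1, t.2.1.1, t.2.2⟩
  refine ⟨⟨.ofObj ob, inferInstance, fun e he ↦ ?_⟩⟩
  obtain ⟨X, hX, ⟨i : e.fst ≅ X⟩⟩ := hP _ he.1
  obtain ⟨Y, hY, ⟨j : e.snd ≅ Y⟩⟩ := hQ _ he.2
  let φ : F.obj X ≅ G.obj Y := (F.mapIso i).symm ≪≫ e.iso ≪≫ G.mapIso j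
  have hob : ObjectProperty.ofObj ob ⟨X, Y, φ⟩ :=
    ObjectProperty.ofObj_apply ob ⟨⟨X, hX⟩, ⟨Y, hY⟩, φ⟩
  exact ⟨_, hob, ⟨mkIso i j⟩⟩

variable (κ : Cardinal.{v}) [Fact κ.IsRegular]
  [HasCardinalFilteredColimits.{v} A κ] [HasCardinalFilteredColimits.{v} B κ]
  [F.IsCardinalAccessible κ] [G.IsCardinalAccessible κ]

instance hasCardinalFilteredColimits_categoricalPullback :
    HasCardinalFilteredColimits.{v} (F ⊡ G) κ where
  hasColimitsOfShape J _ _ := by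
    have := HasCardinalFilteredColimits.hasColimitsOfShape (κ := κ) A J
    have := HasCardinalFilteredColimits.hasColimitsOfShape (κ := κ) B J
    have := F.preservesColimitsOfShape_of_isCardinalAccessible κ J
    have := G.preservesColimitsOfShape_of_isCardinalAccessible κ J
    infer_instance

instance isCardinalAccessible_π₁ : (π₁ F G).IsCardinalAccessible κ where
  preservesColimitOfShape J _ _ := by
    have := HasCardinalFilteredColimits.hasColimitsOfShape (κ := κ) A J
    have := HasCardinalFilteredColimits.hasColimitsOfShape (κ := κ) B J
    have := F.preservesColimitsOfShape_of_isCardinalAccessible κ J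
    have := G.preservesColimitsOfShape_of_isCardinalAccessible κ J
    infer_instance

instance isCardinalAccessible_π₂ : (π₂ F G).IsCardinalAccessible κ where
  preservesColimitOfShape J _ _ := by
    have := HasCardinalFilteredColimits.hasColimitsOfShape (κ := κ) A J
    have := HasCardinalFilteredColimits.hasColimitsOfShape (κ := κ) B J
    have := F.preservesColimitsOfShape_of_isCardinalAccessible κ J
    have := G.preservesColimitsOfShape_of_isCardinalAccessible κ J
    infer_instance

lemma inverseImage_π₁_inf_π₂_le_isCardinalPresentable
    (hF : isCardinalPresentable A κ ≤ (isCardinalPresentable C κ).inverseImage F) :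
    (isCardinalPresentable A κ).inverseImage (π₁ F G) ⊓
      (isCardinalPresentable B κ).inverseImage (π₂ F G) ≤ isCardinalPresentable (F ⊡ G) κ := by
  rintro e ⟨h₁, h₂⟩
  have : IsCardinalPresentable e.fst κ := h₁
  have : IsCardinalPresentable e.snd κ := h₂
  have : IsCardinalPresentable (F.obj e.fst) κ := hF _ h₁
  exact isCardinalAccessible_of_isPullback (isPullback_coyoneda e) κ

end PullbackPresentable

section PullbackGenerator

open CategoricalPullback

lemma exists_partialOrder_colimitsOfShape_pair {κ : Cardinal.{v}} [Fact κ.IsRegular]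
    {A : Type u₁} [Category.{v} A] {B : Type u₃} [Category.{v} B] {Q : ObjectProperty A}
    {Q' : ObjectProperty B} (hQ : Q.IsCardinalFilteredGenerator κ)
    (hQ' : Q'.IsCardinalFilteredGenerator κ) (X : A) (Y : B) :
    ∃ (P : Type v) (_ : PartialOrder P) (_ : IsCardinalFiltered P κ),
      Q.colimitsOfShape P X ∧ Q'.colimitsOfShape P Y := by
  obtain ⟨I, _, _, hX⟩ := hQ.exists_colimitsOfShape X
  obtain ⟨J, _, _, hY⟩ := hQ'.exists_colimitsOfShape Y
  have := isFiltered_of_isCardinalFiltered I κ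
  have := isFiltered_of_isCardinalFiltered J κ
  obtain ⟨P, _, _, T, _⟩ := IsCardinalFiltered.exists_cardinal_directed (I × J) κ
  exact ⟨P, inferInstance, inferInstance,
    Q.colimitsOfShape_le_of_final (T ⋙ CategoryTheory.Prod.fst I J) X hX,
    Q'.colimitsOfShape_le_of_final (T ⋙ CategoryTheory.Prod.snd I J) Y hY⟩

variable {A : Type u₁} [Category.{v} A] {B : Type u₃} [Category.{v} B] {C : Type u₂}
  [Category.{v} C] {F : A ⥤ C} {G : B ⥤ C}

lemma colimitsOfShape_inverseImage_π₁_inf_π₂ {J : Type v} [SmallCategory J]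
    [PreservesColimitsOfShape J F] {Q : ObjectProperty A} {Q' : ObjectProperty B}
    {D₁ : J ⥤ A} {D₂ : J ⥤ B} {c₁ : Cocone D₁} {c₂ : Cocone D₂} (hc₁ : IsColimit c₁)
    (hc₂ : IsColimit c₂) (hQ : ∀ x, Q (D₁.obj x)) (hQ' : ∀ x, Q' (D₂.obj x))
    (e : F.obj c₁.pt ≅ G.obj c₂.pt)
    (hε : ∀ x, ∃ ε : F.obj (D₁.obj x) ≅ G.obj (D₂.obj x),
      ε.hom ≫ G.map (c₂.ι.app x) = F.map (c₁.ι.app x) ≫ e.hom)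
    (hmono : ∀ x y, monoTests (G.map (c₂.ι.app y)) (F.obj (D₁.obj x))) :
    (Q.inverseImage (π₁ F G) ⊓ Q'.inverseImage (π₂ F G)).colimitsOfShape J
      ⟨c₁.pt, c₂.pt, e⟩ := by
  choose ε hε using hε
  have naturality {x y : J} (a : x ⟶ y) :
      F.map (D₁.map a) ≫ (ε y).hom = (ε x).hom ≫ G.map (D₂.map a) := by
    refine hmono x y ?_
    simp only [Category.assoc, hε, ← F.map_comp_assoc, ← G.map_comp, c₁.w, c₂.w]
  let D : J ⥤ F ⊡ G :=
    { obj x := ⟨D₁.obj x, D₂.obj x, ε x⟩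
      map a := { fst := D₁.map a, snd := D₂.map a, w := naturality a } }
  let c : Cocone D :=
    { pt := ⟨c₁.pt, c₂.pt, e⟩
      ι.app x := { fst := c₁.ι.app x, snd := c₂.ι.app x, w := (hε x).symm }
      ι.naturality _ _ a := CategoricalPullback.hom_ext (c₁.ι.naturality a) (c₂.ι.naturality a) }
  have hc : IsColimit c := isColimitOfProjections hc₁ hc₂
  exact ⟨{ diag := D, ι := c.ι, isColimit := hc, prop_diag_obj := fun x ↦ ⟨hQ x, hQ' x⟩ }⟩

variable {κ κ' : Cardinal.{v}} [Fact κ.IsRegular] [Fact κ'.IsRegular]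
  [HasCardinalFilteredColimits A κ] [HasCardinalFilteredColimits B κ]
  [F.IsCardinalAccessible κ] [G.IsCardinalAccessible κ]

lemma exists_iso_subdiagramColimit_demands {P : Type v} [PartialOrder P] [IsCardinalFiltered P κ]
    {𝒯 : ObjectProperty C} (h𝒯 : 𝒯 ≤ isCardinalPresentable C κ)
    (h𝒯' : ∀ Z, 𝒯 Z → HasCardinalLT (Σ T : Subtype 𝒯, T.1 ⟶ Z) κ') {D₁ : P ⥤ A} {D₂ : P ⥤ B}
    {c₁ : Cocone D₁} {c₂ : Cocone D₂} (hc₁ : IsColimit c₁) (hc₂ : IsColimit c₂)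
    (hD₁ : ∀ p, 𝒯 (F.obj (D₁.obj p))) (hD₂ : ∀ p, 𝒯 (G.obj (D₂.obj p)))
    (e : F.obj c₁.pt ≅ G.obj c₂.pt) :
    ∃ E : P → Set P, (∀ p, HasCardinalLT (E p) κ') ∧ ∀ U : Subtype (IsStable κ κ' E),
      𝒯 ≤ monoTests (G.map (fromSubdiagramColimit c₂ U)) ∧
        ∃ ε : F.obj ((subdiagramColimit D₁ _).obj U) ≅ G.obj ((subdiagramColimit D₂ _).obj U),
          ε.hom ≫ G.map (fromSubdiagramColimit c₂ U) =
            F.map (fromSubdiagramColimit c₁ U) ≫ e.hom := by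
  have := F.preservesColimitsOfShape_of_isCardinalAccessible κ P
  have := G.preservesColimitsOfShape_of_isCardinalAccessible κ P
  obtain ⟨E, hE, hiso⟩ := exists_iso_demands (M := D₁ ⋙ F) (N := D₂ ⋙ G) h𝒯 hD₁ hD₂
    (fun p ↦ h𝒯' _ (hD₁ p)) (fun p ↦ h𝒯' _ (hD₂ p)) (isColimitOfPreserves F hc₁)
    (isColimitOfPreserves G hc₂) e
  refine ⟨E, hE, fun U ↦ ?_⟩
  have := F.preservesColimitsOfShape_of_isCardinalAccessible κ U.1
  have := G.preservesColimitsOfShape_of_isCardinalAccessible κ U.1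
  refine hiso U.1 U.2.subset (isColimitOfPreserves F (isColimitSubdiagramCocone D₁ U))
    (isColimitOfPreserves G (isColimitSubdiagramCocone D₂ U)) (fun p ↦ ?_) fun p ↦ ?_
  · exact (F.map_comp _ _).symm.trans (congrArg F.map (toSubdiagramColimit_comp_from c₁ U p))
  · exact (G.map_comp _ _).symm.trans (congrArg G.map (toSubdiagramColimit_comp_from c₂ U p))

lemma HasStableHulls.exists_colimitsOfShape_categoricalPullback (h : HasStableHulls κ κ')
    (hκ : κ ≤ κ') {Q : ObjectProperty A} {Q' : ObjectProperty B} {𝒯 : ObjectProperty C}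
    (hQ : Q.IsCardinalFilteredGenerator κ) (hQ' : Q'.IsCardinalFilteredGenerator κ)
    (h𝒯 : 𝒯 ≤ isCardinalPresentable C κ)
    (h𝒯' : ∀ Z, 𝒯 Z → HasCardinalLT (Σ T : Subtype 𝒯, T.1 ⟶ Z) κ')
    (hF : Q ≤ 𝒯.inverseImage F) (hG : Q' ≤ 𝒯.inverseImage G) (e : F ⊡ G) :
    ∃ (J : Type v) (_ : SmallCategory J) (_ : IsCardinalFiltered J κ'),
      ((isCardinalPresentable A κ').inverseImage (π₁ F G) ⊓
        (isCardinalPresentable B κ').inverseImage (π₂ F G)).colimitsOfShape J e := by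
  obtain ⟨X, Y, e⟩ := e
  obtain ⟨P, _, _, ⟨p₁⟩, ⟨p₂⟩⟩ := exists_partialOrder_colimitsOfShape_pair hQ hQ' X Y
  have hF₁ (x : P) : 𝒯 (F.obj (p₁.diag.obj x)) := hF _ (p₁.prop_diag_obj x)
  obtain ⟨E, hE, hiso⟩ := exists_iso_subdiagramColimit_demands h𝒯 h𝒯' p₁.isColimit p₂.isColimit
    hF₁ (fun x ↦ hG _ (p₂.prop_diag_obj x)) e
  obtain ⟨hc₁⟩ := h.nonempty_isColimit hE p₁.isColimit
  obtain ⟨hc₂⟩ := h.nonempty_isColimit hE p₂.isColimit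
  have := h.isCardinalFiltered_isStable hE
  have := IsCardinalFiltered.of_le (Subtype (IsStable κ κ' E)) hκ
  have := F.preservesColimitsOfShape_of_isCardinalAccessible κ (Subtype (IsStable κ κ' E))
  refine ⟨Subtype (IsStable κ κ' E), inferInstance, inferInstance,
    colimitsOfShape_inverseImage_π₁_inf_π₂ hc₁ hc₂ (fun U ↦ ?_) (fun U ↦ ?_) e
      (fun U ↦ (hiso U).2) fun U V ↦ ?_⟩
  · exact isCardinalPresentable_of_isColimit_of_hasCardinalLT U.2.hasCardinalLT
      (isColimitSubdiagramCocone p₁.diag U) fun x ↦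
        isCardinalPresentable_monotone A hκ _ (hQ.le_isCardinalPresentable _ (p₁.prop_diag_obj x))
  · exact isCardinalPresentable_of_isColimit_of_hasCardinalLT U.2.hasCardinalLT
      (isColimitSubdiagramCocone p₂.diag U) fun x ↦
        isCardinalPresentable_monotone B hκ _ (hQ'.le_isCardinalPresentable _ (p₂.prop_diag_obj x))
  · have := F.preservesColimitsOfShape_of_isCardinalAccessible κ U.1
    exact (monoTests _).prop_of_isColimit
      (isColimitOfPreserves F (isColimitSubdiagramCocone p₁.diag U)) fun x ↦ (hiso V).1 _ (hF₁ x.1)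

end PullbackGenerator

section PullbackAccessible

open CategoricalPullback

lemma exists_forall_hasCardinalLT_hom {C : Type u₂} [Category.{v} C]
    (𝒯 : ObjectProperty C) [ObjectProperty.Small.{v} 𝒯] :
    ∃ ν : Cardinal.{v}, ∀ κ ≥ ν, ∀ Z, 𝒯 Z → HasCardinalLT (Σ T : Subtype 𝒯, T.1 ⟶ Z) κ := by
  obtain ⟨ν, -, hν⟩ := HasCardinalLT.exists_regular_cardinal_forall.{v}
    fun Z : Subtype 𝒯 ↦ Σ T : Subtype 𝒯, T.1 ⟶ Z.1
  exact ⟨ν, fun κ hκ Z hZ ↦ (hν ⟨Z, hZ⟩).of_le hκ⟩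

variable {A : Type u₁} [Category.{v} A] {B : Type u₃} [Category.{v} B] {C : Type u₂}
  [Category.{v} C] {F : A ⥤ C} {G : B ⥤ C}

lemma exists_isCardinalAccessibleCategory_categoricalPullback_of_le_inverseImage
    (κ : Cardinal.{v}) [Fact κ.IsRegular] [IsCardinalAccessibleCategory A κ]
    [IsCardinalAccessibleCategory B κ] [F.IsCardinalAccessible κ] [G.IsCardinalAccessible κ]
    (hF : isCardinalPresentable A κ ≤ (isCardinalPresentable C κ).inverseImage F)
    (hG : isCardinalPresentable B κ ≤ (isCardinalPresentable C κ).inverseImage G) :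
    ∃ (κ' : Cardinal.{v}) (_ : Fact κ'.IsRegular), IsCardinalAccessibleCategory A κ' ∧
      IsCardinalAccessibleCategory (F ⊡ G) κ' ∧ (π₁ F G).IsCardinalAccessible κ' := by
  obtain ⟨Q, _, hQ⟩ := HasCardinalFilteredGenerator.exists_small_generator A κ
  obtain ⟨Q', _, hQ'⟩ := HasCardinalFilteredGenerator.exists_small_generator B κ
  let 𝒯 : ObjectProperty C := Q.strictMap F ⊔ Q'.strictMap G
  have h𝒯 : 𝒯 ≤ isCardinalPresentable C κ := by
    rintro _ (⟨X, hX⟩ | ⟨Y, hY⟩)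
    · exact hF _ (hQ.le_isCardinalPresentable _ hX)
    · exact hG _ (hQ'.le_isCardinalPresentable _ hY)
  obtain ⟨ν, hν⟩ := exists_forall_hasCardinalLT_hom 𝒯
  obtain ⟨κ', hκ', hle, hulls⟩ := exists_regular_forall_hasStableHulls (max κ ν)
  have hκ : κ ≤ κ' := (le_max_left _ _).trans hle
  have : Fact κ'.IsRegular := ⟨hκ'⟩
  have h : HasStableHulls κ κ' := hulls κ (le_max_left _ _)
  have : IsCardinalAccessibleCategory A κ' := h.isCardinalAccessibleCategory hκ
  have : IsCardinalAccessibleCategory B κ' := h.isCardinalAccessibleCategory hκ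
  have := F.isCardinalAccessible_of_le hκ
  have := G.isCardinalAccessible_of_le hκ
  have hF' : isCardinalPresentable A κ' ≤ (isCardinalPresentable C κ').inverseImage F :=
    h.isCardinalPresentable_le_inverseImage hκ F
      (hF.trans fun X hX ↦ isCardinalPresentable_monotone C hκ _ hX)
  have gen : ((isCardinalPresentable A κ').inverseImage (π₁ F G) ⊓
      (isCardinalPresentable B κ').inverseImage (π₂ F G)).IsCardinalFilteredGenerator κ' :=
    { le_isCardinalPresentable := inverseImage_π₁_inf_π₂_le_isCardinalPresentable κ' hF'
      exists_colimitsOfShape := h.exists_colimitsOfShape_categoricalPullback hκ hQ hQ' h𝒯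
        (hν κ' ((le_max_right _ _).trans hle))
        (fun X hX ↦ Or.inl (Q.strictMap_obj F hX)) (fun Y hY ↦ Or.inr (Q'.strictMap_obj G hY)) }
  have := gen.hasCardinalFilteredGenerator
  exact ⟨κ', inferInstance, inferInstance, { }, inferInstance⟩

theorem exists_isCardinalAccessibleCategory_categoricalPullback
    {κ₁ κ₂ : Cardinal.{v}} [Fact κ₁.IsRegular] [Fact κ₂.IsRegular]
    [IsCardinalAccessibleCategory A κ₁] [IsCardinalAccessibleCategory B κ₂]
    [F.IsCardinalAccessible κ₁] [G.IsCardinalAccessible κ₂] (hC : ∀ X : C, IsPresentable.{v} X) :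
    ∃ (κ' : Cardinal.{v}) (_ : Fact κ'.IsRegular), IsCardinalAccessibleCategory A κ' ∧
      IsCardinalAccessibleCategory (F ⊡ G) κ' ∧ (π₁ F G).IsCardinalAccessible κ' := by
  obtain ⟨ν₁, hν₁⟩ := exists_isCardinalPresentable_map (κ := κ₁) hC F
  obtain ⟨ν₂, hν₂⟩ := exists_isCardinalPresentable_map (κ := κ₂) hC G
  obtain ⟨κ, hκ, hle, hulls⟩ := exists_regular_forall_hasStableHulls (max (max κ₁ κ₂) (max ν₁ ν₂))
  have : Fact κ.IsRegular := ⟨hκ⟩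
  simp only [max_le_iff] at hle
  obtain ⟨⟨hκ₁, hκ₂⟩, hνκ₁, hνκ₂⟩ := hle
  have h₁ : HasStableHulls κ₁ κ := hulls κ₁ (by simp)
  have h₂ : HasStableHulls κ₂ κ := hulls κ₂ (by simp)
  have := h₁.isCardinalAccessibleCategory (A := A) hκ₁
  have := h₂.isCardinalAccessibleCategory (A := B) hκ₂
  have := F.isCardinalAccessible_of_le hκ₁
  have := G.isCardinalAccessible_of_le hκ₂
  exact exists_isCardinalAccessibleCategory_categoricalPullback_of_le_inverseImage κ
    (h₁.isCardinalPresentable_le_inverseImage hκ₁ F (hν₁ κ hνκ₁))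
    (h₂.isCardinalPresentable_le_inverseImage hκ₂ G (hν₂ κ hνκ₂))

end PullbackAccessible

section Translation

variable (κ : Cardinal.{v}) [Fact κ.IsRegular] {A : Type u₁} [Category.{v} A]

lemma isCardinalDirected_iff_isCardinalFiltered (J : Type v) [Preorder J] :
    IsCardinalDirected κ J ↔ IsCardinalFiltered J κ := by
  constructor
  · intro h
    refine isCardinalFiltered_preorder _ _ fun K s hK ↦ ?_
    obtain ⟨j, hj⟩ := h (Set.range s) (Cardinal.mk_range_le.trans_lt hK)
    exact ⟨j, fun k ↦ hj _ ⟨k, rfl⟩⟩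
  · intro _ S hS
    obtain ⟨j, hj⟩ := bddAbove_range_of_isCardinalFiltered κ ((↑) : S → J)
      ((hasCardinalLT_iff_cardinal_mk_lt S κ).2 hS)
    exact ⟨j, fun s hs ↦ hj ⟨⟨s, hs⟩, rfl⟩⟩

lemma preservesCardinalDirectedColimits_iff_isCardinalAccessible {C : Type u₂} [Category.{v} C]
    (F : A ⥤ C) : PreservesCardinalDirectedColimits κ F ↔ F.IsCardinalAccessible κ := by
  refine ⟨fun h ↦ ⟨fun J _ _ ↦ ?_⟩, fun _ J _ hJ ↦ ?_⟩
  · obtain ⟨P, _, _, T, _⟩ := IsCardinalFiltered.exists_cardinal_directed J κ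
    obtain ⟨_⟩ := h P ((isCardinalDirected_iff_isCardinalFiltered κ P).2 inferInstance)
    exact Functor.Final.preservesColimitsOfShape_of_final T F
  · have := (isCardinalDirected_iff_isCardinalFiltered κ J).1 hJ
    exact ⟨F.preservesColimitsOfShape_of_isCardinalAccessible κ J⟩

lemma isPresentableObj_iff_isCardinalPresentable (X : A) :
    IsPresentableObj κ X ↔ IsCardinalPresentable X κ :=
  preservesCardinalDirectedColimits_iff_isCardinalAccessible κ (coyoneda.obj (op X))

lemma isDirectedColimitFrom_iff_exists_colimitsOfShape (S : Set A) (X : A) :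
    IsDirectedColimitFrom κ S X ↔ ∃ (J : Type v) (_ : Preorder J) (_ : IsCardinalFiltered J κ),
      ObjectProperty.colimitsOfShape (· ∈ S) J X := by
  constructor
  · rintro ⟨J, _, hJ, D, c, ⟨hc⟩, rfl, hD⟩
    exact ⟨J, inferInstance, (isCardinalDirected_iff_isCardinalFiltered κ J).1 hJ,
      ⟨{ diag := D, ι := c.ι, isColimit := hc, prop_diag_obj := hD }⟩⟩
  · rintro ⟨J, _, hJ, ⟨p⟩⟩
    exact ⟨J, inferInstance, (isCardinalDirected_iff_isCardinalFiltered κ J).2 hJ, p.diag,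
      p.cocone, ⟨p.isColimit⟩, rfl, p.prop_diag_obj⟩

lemma isCardinalAccessible_iff_isCardinalAccessibleCategory :
    IsCardinalAccessible κ A ↔ IsCardinalAccessibleCategory A κ := by
  constructor
  · rintro ⟨-, hcolim, S, hS, hpres, hgen⟩
    have : ObjectProperty.Small.{v} (· ∈ S : ObjectProperty A) := hS
    have gen : ObjectProperty.IsCardinalFilteredGenerator (· ∈ S : ObjectProperty A) κ :=
      { le_isCardinalPresentable := fun X hX ↦
          (isPresentableObj_iff_isCardinalPresentable κ X).1 (hpres X hX)
        exists_colimitsOfShape := fun X ↦ by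
          obtain ⟨J, _, hJ, hX⟩ :=
            (isDirectedColimitFrom_iff_exists_colimitsOfShape κ S X).1 (hgen X)
          exact ⟨J, inferInstance, hJ, hX⟩ }
    have := gen.hasCardinalFilteredGenerator
    refine { hasColimitsOfShape := fun J _ _ ↦ ?_ }
    obtain ⟨P, _, _, T, _⟩ := IsCardinalFiltered.exists_cardinal_directed J κ
    have := hcolim P ((isCardinalDirected_iff_isCardinalFiltered κ P).2 inferInstance)
    exact Functor.Final.hasColimitsOfShape_of_final T
  · intro _
    obtain ⟨Q, hsmall, hQ⟩ := HasCardinalFilteredGenerator.exists_small_generator A κ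
    refine ⟨Fact.out, fun J _ hJ ↦ ?_, {X | Q X}, hsmall, fun X hX ↦ ?_, fun X ↦ ?_⟩
    · have := (isCardinalDirected_iff_isCardinalFiltered κ J).1 hJ
      exact HasCardinalFilteredColimits.hasColimitsOfShape (κ := κ) A J
    · exact (isPresentableObj_iff_isCardinalPresentable κ X).2 (hQ.le_isCardinalPresentable X hX)
    · obtain ⟨P, _, hP, hX⟩ := exists_partialOrder_colimitsOfShape hQ X
      exact (isDirectedColimitFrom_iff_exists_colimitsOfShape κ _ X).2
        ⟨P, inferInstance, hP, hX⟩

end Translation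

section FullImage

open CategoricalPullback

variable {A : Type u₁} [Category.{v} A] {B : Type u₃} [Category.{v} B] {C : Type u₂}
  [Category.{v} C]

lemma isPresentable_of_isCardinalAccessible {κ : Cardinal.{v}} (h : IsCardinalAccessible κ A)
    (X : A) : IsPresentable.{v} X := by
  have : Fact κ.IsRegular := ⟨h.isRegular⟩
  have := (isCardinalAccessible_iff_isCardinalAccessibleCategory κ).1 h
  exact (isCardinalFilteredGenerator_isCardinalPresentable A κ).presentable X

lemma range_π₁_obj (F : A ⥤ C) (G : B ⥤ C)
    (hiso : ∀ ⦃X Y : C⦄, (X ≅ Y) → X ∈ Set.range G.obj → Y ∈ Set.range G.obj) :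
    Set.range (π₁ F G).obj = {X | F.obj X ∈ Set.range G.obj} := by
  ext X
  constructor
  · rintro ⟨e, rfl⟩
    exact hiso e.iso.symm ⟨e.snd, rfl⟩
  · rintro ⟨Y, hY⟩
    exact ⟨⟨X, Y, eqToIso hY.symm⟩, rfl⟩

theorem exists_isAccessibleFunctor_categoricalPullback {F : A ⥤ C} {G : B ⥤ C}
    (hF : ∃ κ, IsCardinalAccessible κ A ∧ PreservesCardinalDirectedColimits κ F)
    (hG : ∃ κ, IsCardinalAccessible κ B ∧ PreservesCardinalDirectedColimits κ G)
    (hC : ∀ X : C, IsPresentable.{v} X) : IsAccessibleFunctor (π₁ F G) := by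
  obtain ⟨κ₁, hA, hF⟩ := hF
  obtain ⟨κ₂, hB, hG⟩ := hG
  have : Fact κ₁.IsRegular := ⟨hA.isRegular⟩
  have : Fact κ₂.IsRegular := ⟨hB.isRegular⟩
  rw [isCardinalAccessible_iff_isCardinalAccessibleCategory] at hA hB
  rw [preservesCardinalDirectedColimits_iff_isCardinalAccessible] at hF hG
  obtain ⟨κ, _, hA', hE, hπ₁⟩ :=
    exists_isCardinalAccessibleCategory_categoricalPullback (F := F) (G := G) (κ₁ := κ₁)
      (κ₂ := κ₂) hC
  exact ⟨κ, (isCardinalAccessible_iff_isCardinalAccessibleCategory κ).2 hE,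
    (isCardinalAccessible_iff_isCardinalAccessibleCategory κ).2 hA',
    (preservesCardinalDirectedColimits_iff_isCardinalAccessible κ _).2 hπ₁⟩

end FullImage

theorem statement12_general {A : Type u₁} [Category.{v} A] {C : Type u₂} [Category.{v} C]
    (F : A ⥤ C)
    (hF : ∃ κ : Cardinal.{v}, IsCardinalAccessible κ A ∧ PreservesCardinalDirectedColimits κ F)
    (hC : ∀ X : C, IsPresentable.{v} X) (P : Set C)
    (hiso : ∀ ⦃X Y : C⦄, (X ≅ Y) → X ∈ P → Y ∈ P)
    (himg : ∃ (B : Cat.{v, u₃}) (G : B ⥤ C),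
      (∃ κ : Cardinal.{v}, IsCardinalAccessible κ B ∧ PreservesCardinalDirectedColimits κ G) ∧
        Set.range G.obj = P) :
    (∀ ⦃X Y : A⦄, (X ≅ Y) → F.obj X ∈ P → F.obj Y ∈ P) ∧
    ∃ (B' : Cat.{v, max u₁ u₃ v}) (G' : B' ⥤ A),
      IsAccessibleFunctor G' ∧ Set.range G'.obj = { X : A | F.obj X ∈ P } := by
  obtain ⟨B, G, hG, rfl⟩ := himg
  exact ⟨fun X Y e ↦ hiso (F.mapIso e), Cat.of (CategoricalPullback F G),
    CategoricalPullback.π₁ F G, exists_isAccessibleFunctor_categoricalPullback hF hG hC,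
    range_π₁_obj F G hiso⟩

/-- if `F : A ⥤ C` is an accessible functor and `K ⊆ C` is an
isomorphism-closed full subcategory which is the full image of an accessible functor,
then the full preimage `F⁻¹K` is also isomorphism-closed and the full image of an
accessible functor. Full subcategories are represented by their sets of objects. -/
theorem statement12 {A : Type u₁} [Category.{v} A] {C : Type u₂} [Category.{v} C]
    (F : A ⥤ C) (hF : IsAccessibleFunctor F)
    (P : Set C)
    (hiso : ∀ ⦃X Y : C⦄, (X ≅ Y) → X ∈ P → Y ∈ P)
    (himg : ∃ (B : Cat.{v, u₃}) (G : B ⥤ C), IsAccessibleFunctor G ∧ Set.range G.obj = P) :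
    (∀ ⦃X Y : A⦄, (X ≅ Y) → F.obj X ∈ P → F.obj Y ∈ P) ∧
    ∃ (B' : Cat.{v, max u₁ u₃ v}) (G' : B' ⥤ A),
      IsAccessibleFunctor G' ∧ Set.range G'.obj = { X : A | F.obj X ∈ P } := by
  obtain ⟨κ₁, hA, hC, hF⟩ := hF
  obtain ⟨B, G, ⟨κ₂, hB, -, hG⟩, himg⟩ := himg
  exact statement12_general F ⟨κ₁, hA, hF⟩ (isPresentable_of_isCardinalAccessible hC) P hiso
    ⟨B, G, ⟨κ₂, hB, hG⟩, himg⟩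

end Paper
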